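/- arXiv:0908.0778 — 2 statements merged into one kernel-verified Lean document; each statement's English description precedes it below -/
import Mathlib

section
/- Let V be a C⁵ perturbed quartic potential with ℓ ∈ {−1,1} equal to the sign of V⁽⁴⁾(0), and let T(v) be its period map. There exist K > 0 and C > 0 such that for every integer n ≥ 1 and every t ∈ (0, Kn]: (i) there is a well-defined γ_{n,t} > 0 with T(γ_{n,t}) = 2π − 2ℓt/n; (ii) |γ_{n,t}² − 8t/(3πn)| ≤ C (t/n)^{3/2}, so in particular γ_{n,t} = O((t/n)^{1/2}); (iii) for every v ∈ [−1,1], |(n/2)·T(γ_{n,t} v) − (nπ − ℓt + ℓt(1 − v²))| ≤ C t^{3/2}/n^{1/2}. -/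
open Real Filter Asymptotics Topology

/-- `V` is a C⁵ perturbed quartic potential `V(x) = x²/2 + ℓx⁴/4 + f(x)` with
`ℓ ∈ {-1,1}` (equal to the sign of `V⁽⁴⁾(0)`) and `|f⁽ⁱ⁾(x)| = O(|x|^{5-i})` as `x → 0`. -/
def PerturbedQuartic (V f : ℝ → ℝ) (l : ℝ) : Prop :=
  (l = 1 ∨ l = -1) ∧ ContDiff ℝ 5 f ∧
  (∀ x : ℝ, V x = x ^ 2 / 2 + l * x ^ 4 / 4 + f x) ∧
  (∀ i : ℕ, i ≤ 5 → (iteratedDeriv i f) =O[𝓝 0] fun x : ℝ => |x| ^ (5 - i))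

/-!
The signed square root `h` of `2V` satisfies `h(x) = x + O(x³)` and turns the potential into
`u² / 2`. Substituting `x = X(v sin θ)` with `X = h⁻¹` gives
`T(v) = 2 ∫ θ in -π/2..π/2, X'(|v| sin θ)`. Since `X' = 1 / h'(X)` and
`(1 / h')' = (V'² - 2 V V'') / (h V'²)`, the expansion of `V` shows that `1 / h' + (3/2) l V` has
derivative `O(x²)` at `0`, and `V(X(u)) = u² / 2`, so `X'(u) = 1 - (3/4) l u²` up to a remainder
with increments `O(r²) |u - u'|` for `|u|, |u'| ≤ r`. Such remainders survive the averaging over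
`θ`, whence `T(v) = 2π - (3π/4) l v²` up to a remainder of the same kind. Therefore
`S = (2π - T) / (3πl/4)` differs from `v²` by an error whose increments are dominated by those of
`v²` itself: `S` is strictly monotone on some `[0, r]`, and `γ` is the solution of
`S(γ) = 8t / (3πn)`.
-/

/-! ### Lipschitz error terms -/

/-- `R` is Lipschitz with constant `O(rᵏ)` on the ball of radius `r` around `0`, as `r → 0`. For an
error term of size `O(|x|ᵏ⁺¹)` this is the bound its increments inherit from a derivative of size
`O(|x|ᵏ)`, stated without differentiating. -/
def IsLipschitzBigO {E F : Type*} [NormedAddCommGroup E] [NormedAddCommGroup F] (k : ℕ)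
    (R : E → F) : Prop :=
  (fun p : E × E ↦ R p.1 - R p.2) =O[𝓝 0] fun p ↦ ‖p‖ ^ k * ‖p.1 - p.2‖

namespace IsLipschitzBigO

variable {D E F : Type*} [NormedAddCommGroup D] [NormedAddCommGroup E] [NormedAddCommGroup F]
  {k : ℕ} {R R' : E → F}

lemma of_norm_sub_le {C r : ℝ} (hr : 0 < r)
    (h : ∀ x y, ‖x‖ < r → ‖y‖ < r → ‖R x - R y‖ ≤ C * (max ‖x‖ ‖y‖ ^ k * ‖x - y‖)) :
    IsLipschitzBigO k R := by
  refine IsBigO.of_bound C ?_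
  filter_upwards [Metric.ball_mem_nhds (0 : E × E) hr] with p hp
  rw [mem_ball_zero_iff, Prod.norm_def, max_lt_iff] at hp
  rw [norm_mul, norm_pow, norm_norm, norm_norm, Prod.norm_def]
  exact h p.1 p.2 hp.1 hp.2

lemma exists_norm_sub_le (hR : IsLipschitzBigO k R) :
    ∃ C > 0, ∃ r > 0, ∀ x y, ‖x‖ < r → ‖y‖ < r →
      ‖R x - R y‖ ≤ C * (max ‖x‖ ‖y‖ ^ k * ‖x - y‖) := by
  obtain ⟨C, hC, hbound⟩ := hR.exists_pos
  obtain ⟨r, hr, hball⟩ := Metric.eventually_nhds_iff_ball.1 hbound.bound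
  refine ⟨C, hC, r, hr, fun x y hx hy ↦ ?_⟩
  have hxy : (x, y) ∈ Metric.ball 0 r := by simpa [Prod.norm_def] using ⟨hx, hy⟩
  have h := hball (x, y) hxy
  rwa [norm_mul, norm_pow, norm_norm, norm_norm, Prod.norm_def] at h

lemma congr (hR : IsLipschitzBigO k R) (h : R =ᶠ[𝓝 0] R') : IsLipschitzBigO k R' := by
  refine IsBigO.congr' hR ?_ EventuallyEq.rfl
  filter_upwards [(continuous_fst.tendsto (0 : E × E)).eventually h,
    (continuous_snd.tendsto (0 : E × E)).eventually h] with p hp₁ hp₂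
  rw [hp₁, hp₂]

lemma const_mul {R : E → ℝ} (hR : IsLipschitzBigO k R) (c : ℝ) :
    IsLipschitzBigO k (fun x ↦ c * R x) := by
  simpa [IsLipschitzBigO, mul_sub] using IsBigO.const_mul_left hR c

lemma add_const (hR : IsLipschitzBigO k R) (c : F) : IsLipschitzBigO k (fun x ↦ R x + c) := by
  simpa only [IsLipschitzBigO, add_sub_add_right_eq_sub] using hR

lemma eventually_continuousAt (hR : IsLipschitzBigO k R) : ∀ᶠ x in 𝓝 0, ContinuousAt R x := by
  obtain ⟨C, -, r, hr, hbound⟩ := hR.exists_norm_sub_le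
  filter_upwards [Metric.ball_mem_nhds (0 : E) hr] with x hx
  refine tendsto_sub_nhds_zero_iff.1 (squeeze_zero_norm'
    (a := fun y ↦ C * (max ‖y‖ ‖x‖ ^ k * ‖y - x‖)) ?_ ?_)
  · filter_upwards [Metric.isOpen_ball.mem_nhds hx] with y hy
    exact hbound y x (mem_ball_zero_iff.1 hy) (mem_ball_zero_iff.1 hx)
  · have : Continuous fun y : E ↦ C * (max ‖y‖ ‖x‖ ^ k * ‖y - x‖) := by fun_prop
    simpa using this.tendsto x

lemma comp {X : D → E} (hR : IsLipschitzBigO k R) (hX : IsLipschitzBigO 0 X) (hX0 : X 0 = 0) :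
    IsLipschitzBigO k (R ∘ X) := by
  obtain ⟨C, hC, r, hr, hRbound⟩ := hR.exists_norm_sub_le
  obtain ⟨L, hL, ρ, hρ, hXbound⟩ := hX.exists_norm_sub_le
  have hXsub : ∀ x y, ‖x‖ < ρ → ‖y‖ < ρ → ‖X x - X y‖ ≤ L * ‖x - y‖ := by simpa using hXbound
  have hXnorm : ∀ x, ‖x‖ < ρ → ‖X x‖ ≤ L * ‖x‖ := fun x hx ↦ by
    simpa [hX0] using hXsub x 0 hx (by simpa using hρ)
  have hXr : ∀ x, ‖x‖ < min ρ (r / L) → ‖X x‖ < r := fun x hx ↦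
    (hXnorm x (hx.trans_le (min_le_left _ _))).trans_lt <| by
      rw [mul_comm, ← lt_div_iff₀ hL]
      exact hx.trans_le (min_le_right _ _)
  refine of_norm_sub_le (C := C * (L ^ k * L)) (lt_min hρ (div_pos hr hL)) fun x y hx hy ↦ ?_
  have hxρ := hx.trans_le (min_le_left _ _)
  have hyρ := hy.trans_le (min_le_left _ _)
  have hmax : max ‖X x‖ ‖X y‖ ≤ L * max ‖x‖ ‖y‖ := by
    rw [mul_max_of_nonneg _ _ hL.le]
    exact max_le_max (hXnorm x hxρ) (hXnorm y hyρ)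
  calc ‖R (X x) - R (X y)‖ ≤ C * (max ‖X x‖ ‖X y‖ ^ k * ‖X x - X y‖) :=
        hRbound _ _ (hXr x hx) (hXr y hy)
    _ ≤ C * ((L * max ‖x‖ ‖y‖) ^ k * (L * ‖x - y‖)) := by
        gcongr
        exact hXsub x y hxρ hyρ
    _ = C * (L ^ k * L) * (max ‖x‖ ‖y‖ ^ k * ‖x - y‖) := by ring

end IsLipschitzBigO

lemma isLipschitzBigO_zero_abs : IsLipschitzBigO 0 (abs : ℝ → ℝ) :=
  IsBigO.of_bound 1 <| Eventually.of_forall fun p ↦ by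
    simpa using abs_abs_sub_abs_le p.1 p.2

lemma isLipschitzBigO_zero_of_hasStrictDerivAt {X : ℝ → ℝ} {X' : ℝ}
    (hX : HasStrictDerivAt X X' 0) : IsLipschitzBigO 0 X := by
  unfold IsLipschitzBigO
  rw [← Prod.mk_zero_zero]
  simpa only [pow_zero, one_mul] using (HasStrictFDerivAt.isBigO_sub hX).norm_right

lemma isLipschitzBigO_of_deriv_isBigO {F : Type*} [NormedAddCommGroup F] [NormedSpace ℝ F] {k : ℕ}
    {G : ℝ → F} (hG : ∀ᶠ x in 𝓝 0, DifferentiableAt ℝ G x)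
    (hG' : deriv G =O[𝓝 0] fun x : ℝ ↦ x ^ k) : IsLipschitzBigO k G := by
  obtain ⟨C, hC, hbound⟩ := hG'.exists_pos
  obtain ⟨r, hr, hball⟩ := Metric.eventually_nhds_iff_ball.1 (hG.and hbound.bound)
  refine .of_norm_sub_le (C := C) hr fun x y hx hy ↦ ?_
  have hsub : ∀ z ∈ Metric.closedBall (0 : ℝ) (max ‖x‖ ‖y‖), z ∈ Metric.ball (0 : ℝ) r :=
    fun z hz ↦ Metric.closedBall_subset_ball (max_lt hx hy) hz
  rw [← mul_assoc]
  refine (convex_closedBall 0 _).norm_image_sub_le_of_norm_deriv_le (𝕜 := ℝ)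
    (fun z hz ↦ (hball z (hsub z hz)).1) (fun z hz ↦ ?_) (by simp) (by simp)
  calc ‖deriv G z‖ ≤ C * ‖z ^ k‖ := (hball z (hsub z hz)).2
    _ ≤ C * max ‖x‖ ‖y‖ ^ k := by
        rw [norm_pow]
        gcongr
        exact mem_closedBall_zero_iff.1 hz

lemma norm_mul_le_of_abs_le_one {c : ℝ} (hc : |c| ≤ 1) (v : ℝ) : ‖v * c‖ ≤ ‖v‖ := by
  rw [norm_mul]
  exact mul_le_of_le_one_right (norm_nonneg v) hc

section Averaging

variable {F : Type*} [NormedAddCommGroup F] {k : ℕ} {R : ℝ → F} {s : ℝ → ℝ}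

lemma IsLipschitzBigO.eventually_intervalIntegrable_comp_mul (hR : IsLipschitzBigO k R)
    (hs : Continuous s) (hs1 : ∀ θ, |s θ| ≤ 1) (a b : ℝ) :
    ∀ᶠ v in 𝓝 0, IntervalIntegrable (fun θ ↦ R (v * s θ)) MeasureTheory.volume a b := by
  obtain ⟨r, hr, hcont⟩ := Metric.eventually_nhds_iff_ball.1 hR.eventually_continuousAt
  filter_upwards [Metric.ball_mem_nhds (0 : ℝ) hr] with v hv
  refine Continuous.intervalIntegrable (continuous_iff_continuousAt.2 fun θ ↦ ?_) a b
  have hvθ : v * s θ ∈ Metric.ball (0 : ℝ) r := mem_ball_zero_iff.2 <|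
    (norm_mul_le_of_abs_le_one (hs1 θ) v).trans_lt (mem_ball_zero_iff.1 hv)
  exact ContinuousAt.comp (f := fun θ ↦ v * s θ) (hcont _ hvθ) (by fun_prop)

lemma IsLipschitzBigO.intervalIntegral_comp_mul [NormedSpace ℝ F] (hR : IsLipschitzBigO k R)
    (hs : Continuous s) (hs1 : ∀ θ, |s θ| ≤ 1) (a b : ℝ) :
    IsLipschitzBigO k (fun v ↦ ∫ θ in a..b, R (v * s θ)) := by
  obtain ⟨C, hC, r, hr, hbound⟩ := hR.exists_norm_sub_le
  obtain ⟨ρ, hρ, hint⟩ := Metric.eventually_nhds_iff_ball.1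
    (hR.eventually_intervalIntegrable_comp_mul hs hs1 a b)
  refine .of_norm_sub_le (C := C * |b - a|) (lt_min hr hρ) fun v w hv hw ↦ ?_
  rw [lt_min_iff] at hv hw
  rw [← intervalIntegral.integral_sub (hint v (mem_ball_zero_iff.2 hv.2))
    (hint w (mem_ball_zero_iff.2 hw.2)), mul_right_comm]
  refine intervalIntegral.norm_integral_le_of_norm_le_const fun θ _ ↦ ?_
  have hmul := norm_mul_le_of_abs_le_one (hs1 θ)
  calc ‖R (v * s θ) - R (w * s θ)‖
      ≤ C * (max ‖v * s θ‖ ‖w * s θ‖ ^ k * ‖v * s θ - w * s θ‖) :=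
        hbound _ _ ((hmul v).trans_lt hv.1) ((hmul w).trans_lt hw.1)
    _ ≤ C * (max ‖v‖ ‖w‖ ^ k * ‖v - w‖) := by
        rw [← sub_mul]
        gcongr
        exacts [hmul v, hmul w, hmul _]

end Averaging

/-! ### Inversion of a perturbed square -/

section Scaling

variable {S : ℝ → ℝ}

lemma exists_half_mul_sub_le (hS : IsLipschitzBigO 2 fun v ↦ S v - v ^ 2) :
    ∃ r > 0, ∀ b a, 0 ≤ b → b ≤ a → a ≤ r → a * (a - b) / 2 ≤ S a - S b := by
  obtain ⟨C, hC, ρ, hρ, hbound⟩ := hS.exists_norm_sub_le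
  refine ⟨min (ρ / 2) (1 / (2 * C)), by positivity, fun b a hb hba har ↦ ?_⟩
  have ha : 0 ≤ a := hb.trans hba
  have haρ : a < ρ := by linarith [har.trans (min_le_left _ _)]
  have hCa : C * a ≤ 1 / 2 := by
    have := har.trans (min_le_right _ _)
    rw [le_div_iff₀ (by positivity)] at this
    linarith
  have herr : |S a - a ^ 2 - (S b - b ^ 2)| ≤ a * (a - b) / 2 := by
    have h := hbound a b (by rwa [norm_eq_abs, abs_of_nonneg ha])
      (by rw [norm_eq_abs, abs_of_nonneg hb]; linarith)
    simp only [norm_eq_abs, abs_of_nonneg ha, abs_of_nonneg hb, max_eq_left hba,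
      abs_of_nonneg (sub_nonneg.2 hba)] at h
    calc _ ≤ C * (a ^ 2 * (a - b)) := h
      _ = C * a * (a * (a - b)) := by ring
      _ ≤ 1 / 2 * (a * (a - b)) :=
          mul_le_mul_of_nonneg_right hCa (mul_nonneg ha (sub_nonneg.2 hba))
      _ = a * (a - b) / 2 := by ring
  have hsq : a * (a - b) ≤ a ^ 2 - b ^ 2 := by nlinarith
  linarith [(abs_le.1 herr).1]

lemma exists_continuousOn_strictMonoOn (hS : IsLipschitzBigO 2 fun v ↦ S v - v ^ 2) :
    ∃ r > 0, ContinuousOn S (Set.Icc 0 r) ∧ StrictMonoOn S (Set.Icc 0 r) ∧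
      ∀ a ∈ Set.Icc 0 r, a ^ 2 / 2 ≤ S a - S 0 := by
  obtain ⟨r, hr, hlower⟩ := exists_half_mul_sub_le hS
  obtain ⟨ρ, hρ, hcont⟩ := Metric.eventually_nhds_iff_ball.1 hS.eventually_continuousAt
  refine ⟨min r (ρ / 2), by positivity, fun a ha ↦ ?_, fun b hb a ha hba ↦ ?_, fun a ha ↦ ?_⟩
  · have haρ : a ∈ Metric.ball (0 : ℝ) ρ := by
      rw [mem_ball_zero_iff, norm_eq_abs, abs_of_nonneg ha.1]
      linarith [ha.2.trans (min_le_right _ _)]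
    have := (hcont a haρ).add (g := fun v ↦ v ^ 2) (by fun_prop)
    exact (this.congr (by simp [EventuallyEq])).continuousWithinAt
  · have hpos : 0 < a * (a - b) := mul_pos (hb.1.trans_lt hba) (sub_pos.2 hba)
    linarith [hlower b a hb.1 hba.le (ha.2.trans (min_le_left _ _))]
  · linarith [hlower 0 a le_rfl ha.1 (ha.2.trans (min_le_left _ _))]

lemma exists_abs_sub_sq_le (hS0 : S 0 = 0) (hS : IsLipschitzBigO 2 fun v ↦ S v - v ^ 2) :
    ∃ C > 0, ∃ r > 0, ∀ v, |v| < r → |S v - v ^ 2| ≤ C * |v| ^ 3 := by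
  obtain ⟨C, hC, r, hr, hbound⟩ := hS.exists_norm_sub_le
  refine ⟨C, hC, r, hr, fun v hv ↦ ?_⟩
  have h := hbound v 0 hv (by simpa using hr)
  rw [norm_zero, sub_zero, max_eq_left (norm_nonneg v), ← pow_succ] at h
  simpa only [hS0, norm_eq_abs, ne_eq, OfNat.ofNat_ne_zero, not_false_eq_true, zero_pow,
    sub_zero] using h

lemma le_two_mul_sqrt_of_sq_div_two_le {γ s : ℝ} (h : γ ^ 2 / 2 ≤ s) : γ ≤ 2 * √s := by
  have hs : 0 ≤ s := by nlinarith
  refine (abs_le_of_sq_le_sq' ?_ (by positivity)).2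
  rw [mul_pow, sq_sqrt hs]
  linarith

lemma abs_comp_mul_sub_sq_le {C γ s : ℝ} (hC : 0 ≤ C) (hγ : 0 ≤ γ) (hγs : γ ^ 2 / 2 ≤ s)
    (hcubic : ∀ v, |v| ≤ γ → |S v - v ^ 2| ≤ C * |v| ^ 3) {v : ℝ} (hv : |v| ≤ 1) :
    |S (γ * v) - (γ * v) ^ 2| ≤ 8 * C * s ^ ((3 : ℝ) / 2) := by
  have hs : 0 ≤ s := by nlinarith
  have hγv : |γ * v| ≤ γ := by
    rw [abs_mul, abs_of_nonneg hγ]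
    exact mul_le_of_le_one_right hγ hv
  calc |S (γ * v) - (γ * v) ^ 2| ≤ C * |γ * v| ^ 3 := hcubic _ hγv
    _ ≤ C * (2 * √s) ^ 3 := by
        gcongr
        exact hγv.trans (le_two_mul_sqrt_of_sq_div_two_le hγs)
    _ = 8 * C * s ^ ((3 : ℝ) / 2) := by
        rw [rpow_div_two_eq_sqrt 3 hs]
        norm_cast
        ring

lemma exists_scalingVelocity (hS0 : S 0 = 0) (hS : IsLipschitzBigO 2 fun v ↦ S v - v ^ 2) :
    ∃ K > 0, ∃ C > 0, ∃ r > 0, ∀ s, 0 < s → s ≤ K →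
      ∃ γ, 0 < γ ∧ γ < r ∧ S γ = s ∧ (∀ γ', 0 < γ' → γ' < r → S γ' = s → γ' = γ) ∧
        |γ ^ 2 - s| ≤ C * s ^ ((3 : ℝ) / 2) ∧ γ ≤ C * √s ∧
        ∀ v ∈ Set.Icc (-1 : ℝ) 1, |S (γ * v) - s * v ^ 2| ≤ C * s ^ ((3 : ℝ) / 2) := by
  obtain ⟨r₁, hr₁, hcont, hmono, hlower⟩ := exists_continuousOn_strictMonoOn hS
  obtain ⟨C, hC, r₂, hr₂, hcubic⟩ := exists_abs_sub_sq_le hS0 hS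
  simp only [hS0, sub_zero] at hlower
  set r := min r₁ r₂
  have hr : 0 < r := lt_min hr₁ hr₂
  have hrr₁ : r ≤ r₁ := min_le_left _ _
  refine ⟨S (r / 2), ?_, 16 * C + 2, by positivity, r, hr, fun s hs hsK ↦ ?_⟩
  · exact lt_of_lt_of_le (by positivity) (hlower (r / 2) ⟨by positivity, by linarith⟩)
  obtain ⟨γ, ⟨hγ0, hγr⟩, rfl⟩ : s ∈ S '' Set.Icc 0 (r / 2) :=
    intermediate_value_Icc (by positivity)
      (hcont.mono (Set.Icc_subset_Icc_right (by linarith))) ⟨hS0.le.trans hs.le, hsK⟩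
  have hγ : 0 < γ := hγ0.lt_of_ne fun h ↦ by simp [← h, hS0] at hs
  have hγsq : γ ^ 2 / 2 ≤ S γ := hlower γ ⟨hγ0, by linarith⟩
  have hest : ∀ v : ℝ, |v| ≤ 1 →
      |S (γ * v) - (γ * v) ^ 2| ≤ 8 * C * S γ ^ ((3 : ℝ) / 2) := fun v ↦
    abs_comp_mul_sub_sq_le hC.le hγ0 hγsq fun v hv ↦
      hcubic v (by linarith [min_le_right r₁ r₂])
  have hsq : |S γ - γ ^ 2| ≤ 8 * C * S γ ^ ((3 : ℝ) / 2) := by simpa using hest 1 (by simp)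
  have hpow : 0 < S γ ^ ((3 : ℝ) / 2) := by positivity
  refine ⟨γ, hγ, by linarith, rfl, fun γ' h0 hr' hs' ↦ ?_, ?_, ?_, fun v hv ↦ ?_⟩
  · exact hmono.injOn ⟨h0.le, by linarith⟩ ⟨hγ0, by linarith⟩ hs'
  · rw [abs_sub_comm]
    nlinarith
  · nlinarith [le_two_mul_sqrt_of_sq_div_two_le hγsq, sqrt_nonneg (S γ)]
  · have hv1 : |v| ≤ 1 := abs_le.2 hv
    have hsv : |v ^ 2 * (S γ - γ ^ 2)| ≤ |S γ - γ ^ 2| := by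
      rw [abs_mul, abs_pow]
      exact mul_le_of_le_one_left (abs_nonneg _) (pow_le_one₀ (abs_nonneg v) hv1)
    calc |S (γ * v) - S γ * v ^ 2|
        = |S (γ * v) - (γ * v) ^ 2 - v ^ 2 * (S γ - γ ^ 2)| := by ring_nf
      _ ≤ |S (γ * v) - (γ * v) ^ 2| + |v ^ 2 * (S γ - γ ^ 2)| := abs_sub _ _
      _ ≤ (16 * C + 2) * S γ ^ ((3 : ℝ) / 2) := by linarith [hest v hv1]

end Scaling

/-! ### The energy coordinate -/

/-- The signed square root `sgn(x) √(2 V(x))` of twice the potential: the coordinate in which `V`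
becomes the harmonic potential `u² / 2`. -/
noncomputable def energyCoord (V : ℝ → ℝ) (x : ℝ) : ℝ :=
  SignType.sign x * √(2 * V x)

lemma energyCoord_zero (V : ℝ → ℝ) : energyCoord V 0 = 0 := by simp [energyCoord]

lemma energyCoord_of_pos (V : ℝ → ℝ) {x : ℝ} (hx : 0 < x) : energyCoord V x = √(2 * V x) := by
  simp [energyCoord, sign_pos hx]

lemma energyCoord_of_neg (V : ℝ → ℝ) {x : ℝ} (hx : x < 0) : energyCoord V x = -√(2 * V x) := by
  simp [energyCoord, sign_neg hx]

lemma energyCoord_sq {V : ℝ → ℝ} {x : ℝ} (hx : x ≠ 0) (hV : 0 ≤ V x) :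
    energyCoord V x ^ 2 = 2 * V x := by
  rcases hx.lt_or_gt with hx | hx
  · rw [energyCoord_of_neg V hx, neg_sq, sq_sqrt (by positivity)]
  · rw [energyCoord_of_pos V hx, sq_sqrt (by positivity)]

lemma abs_energyCoord_sub_mul_le {V : ℝ → ℝ} {x : ℝ} (hx : x ≠ 0) (hV : 0 ≤ V x) :
    |energyCoord V x - x| * |x| ≤ |2 * V x - x ^ 2| := by
  have hadd : |x| ≤ |energyCoord V x + x| := by
    have : 0 ≤ √(2 * V x) := sqrt_nonneg _
    rcases hx.lt_or_gt with hx | hx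
    · rw [energyCoord_of_neg V hx, abs_of_neg hx, abs_of_neg (by linarith)]
      linarith
    · rw [energyCoord_of_pos V hx, abs_of_pos hx, abs_of_pos (by linarith)]
      linarith
  calc |energyCoord V x - x| * |x| ≤ |energyCoord V x - x| * |energyCoord V x + x| := by gcongr
    _ = |2 * V x - x ^ 2| := by rw [← abs_mul, ← energyCoord_sq hx hV]; ring_nf

lemma hasDerivAt_energyCoord {V : ℝ → ℝ} {V' x : ℝ} (hx : x ≠ 0) (hVx : 0 < V x)
    (hV : HasDerivAt V V' x) : HasDerivAt (energyCoord V) (V' / energyCoord V x) x := by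
  have hsign : ∀ᶠ y in 𝓝 x, SignType.sign y = SignType.sign x := by
    simpa [ContinuousAt] using continuousAt_sign_of_ne_zero hx
  have h := ((hV.const_mul 2).sqrt (by positivity)).const_mul (SignType.sign x : ℝ)
  refine (h.congr_of_eventuallyEq ?_).congr_deriv ?_
  · filter_upwards [hsign] with y hy
    rw [energyCoord, hy]
  · have : 0 < √(2 * V x) := sqrt_pos.2 (by positivity)
    rcases hx.lt_or_gt with hx | hx
    · rw [energyCoord_of_neg V hx, sign_neg hx, SignType.coe_neg, SignType.coe_one]
      field_simp
    · rw [energyCoord_of_pos V hx, sign_pos hx, SignType.coe_one]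
      field_simp

/-- The expansion `V(x) = x² / 2 + l x⁴ / 4 + O(x⁵)` as `x → 0` in the C² sense: `V'` and `V''` are
the first two derivatives of `V` near `0`, and the expansion may be differentiated twice, each time
losing one order in the error. -/
structure HasQuarticExpansion (V V' V'' : ℝ → ℝ) (l : ℝ) : Prop where
  hasDerivAt : ∀ᶠ x in 𝓝 0, HasDerivAt V (V' x) x
  hasDerivAt_deriv : ∀ᶠ x in 𝓝 0, HasDerivAt V' (V'' x) x
  isBigO : (fun x ↦ V x - (x ^ 2 / 2 + l * x ^ 4 / 4)) =O[𝓝 0] fun x : ℝ ↦ x ^ 5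
  deriv_isBigO : (fun x ↦ V' x - (x + l * x ^ 3)) =O[𝓝 0] fun x : ℝ ↦ x ^ 4
  deriv_deriv_isBigO : (fun x ↦ V'' x - (1 + 3 * l * x ^ 2)) =O[𝓝 0] fun x : ℝ ↦ x ^ 3

lemma isBigO_pow_pow {m n : ℕ} (h : m ≤ n) : (fun x : ℝ ↦ x ^ n) =O[𝓝 0] fun x ↦ x ^ m := by
  rcases h.eq_or_lt with rfl | h
  exacts [isBigO_refl _ _, (isLittleO_pow_pow h).isBigO]

lemma isBigO_pow_mul {p : ℝ → ℝ} (hp : ContinuousAt p 0) (n : ℕ) :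
    (fun x ↦ x ^ n * p x) =O[𝓝 0] fun x ↦ x ^ n := by
  simpa only [mul_one] using (isBigO_refl _ _).mul (hp.tendsto.isBigO_one ℝ)

lemma isBigO_nhds_of_nhdsNE {E F : Type*} [NormedAddCommGroup E] [NormedAddCommGroup F]
    {f : ℝ → E} {g : ℝ → F} {a : ℝ} (h : f =O[𝓝[≠] a] g) (ha : f a = 0) : f =O[𝓝 a] g := by
  rw [← nhdsNE_sup_pure, isBigO_sup]
  exact ⟨h, by simp [isBigO_pure, ha]⟩

lemma isBigO_pow_div {f g : ℝ → ℝ} {F : Filter ℝ} {m k : ℕ} (hf : f =O[F] fun x ↦ x ^ (m + k))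
    (hg : g =Θ[F] fun x ↦ x ^ k) : (fun x ↦ f x / g x) =O[F] fun x ↦ x ^ m := by
  simp only [div_eq_mul_inv]
  refine (hf.mul hg.inv.isBigO).trans (isBigO_of_le _ fun x ↦ ?_)
  rcases eq_or_ne x 0 with rfl | hx
  · rcases k.eq_zero_or_pos with rfl | hk
    · simp
    · simp [hk.ne']
  · rw [pow_add, mul_inv_cancel_right₀ (pow_ne_zero k hx)]

lemma hasDerivAt_zero_of_isBigO_pow {f : ℝ → ℝ} {n : ℕ} (hn : 1 < n)
    (hf : f =O[𝓝 0] fun x ↦ x ^ n) : HasDerivAt f 0 0 := by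
  have h : f =O[𝓝 0] fun x ↦ ‖x - 0‖ ^ n := by simpa only [sub_zero, norm_pow] using hf.norm_right
  exact (hasDerivAt_iff_hasFDerivAt.2 (by simpa using h.hasFDerivAt hn))

namespace HasQuarticExpansion

variable {V V' V'' : ℝ → ℝ} {l : ℝ}

lemma two_mul_sub_sq_isBigO (hV : HasQuarticExpansion V V' V'' l) :
    (fun x ↦ 2 * V x - x ^ 2) =O[𝓝 0] fun x ↦ x ^ 4 := by
  refine (((hV.isBigO.trans (isBigO_pow_pow (by norm_num))).const_mul_left 2).add
    ((isBigO_refl (fun x : ℝ ↦ x ^ 4) (𝓝 0)).const_mul_left (l / 2))).congr_left fun x ↦ ?_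
  ring

lemma deriv_sub_id_isBigO (hV : HasQuarticExpansion V V' V'' l) :
    (fun x ↦ V' x - x) =O[𝓝 0] fun x ↦ x ^ 3 := by
  refine ((hV.deriv_isBigO.trans (isBigO_pow_pow (by norm_num))).add
    ((isBigO_refl (fun x : ℝ ↦ x ^ 3) (𝓝 0)).const_mul_left l)).congr_left fun x ↦ ?_
  ring

lemma zero (hV : HasQuarticExpansion V V' V'' l) : V 0 = 0 := by
  obtain ⟨C, hC⟩ := hV.isBigO.bound
  simpa using hC.self_of_nhds

lemma eventually_pos (hV : HasQuarticExpansion V V' V'' l) : ∀ᶠ x in 𝓝[≠] 0, 0 < V x := by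
  have h := hV.two_mul_sub_sq_isBigO.trans_isLittleO (isLittleO_pow_pow (by norm_num : 2 < 4))
  filter_upwards [(h.def (by norm_num : (0 : ℝ) < 1 / 2)).filter_mono nhdsWithin_le_nhds,
    self_mem_nhdsWithin] with x hx hx0
  rw [norm_eq_abs, norm_of_nonneg (sq_nonneg x)] at hx
  have : 0 < x ^ 2 := sq_pos_iff.2 hx0
  linarith [(abs_le.1 hx).1]

lemma eventually_energyCoord_sq (hV : HasQuarticExpansion V V' V'' l) :
    ∀ᶠ x in 𝓝 0, energyCoord V x ^ 2 = 2 * V x := by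
  rw [← nhdsNE_sup_pure, eventually_sup]
  refine ⟨?_, by simp [energyCoord_zero, hV.zero]⟩
  filter_upwards [hV.eventually_pos, self_mem_nhdsWithin] with x hx hx0
  exact energyCoord_sq hx0 hx.le

lemma energyCoord_sub_id_isBigO (hV : HasQuarticExpansion V V' V'' l) :
    (fun x ↦ energyCoord V x - x) =O[𝓝 0] fun x ↦ x ^ 3 := by
  refine isBigO_nhds_of_nhdsNE ?_ (by simp [energyCoord_zero])
  obtain ⟨C, hC⟩ := hV.two_mul_sub_sq_isBigO.bound
  refine IsBigO.of_bound C ?_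
  filter_upwards [hC.filter_mono nhdsWithin_le_nhds, hV.eventually_pos, self_mem_nhdsWithin]
    with x hx hVx hx0
  refine le_of_mul_le_mul_right ?_ (abs_pos.2 hx0)
  calc |energyCoord V x - x| * |x| ≤ |2 * V x - x ^ 2| := abs_energyCoord_sub_mul_le hx0 hVx.le
    _ ≤ C * ‖x ^ 4‖ := hx
    _ = C * ‖x ^ 3‖ * |x| := by rw [mul_assoc, pow_succ x 3, norm_mul, norm_eq_abs x]

lemma isTheta_deriv (hV : HasQuarticExpansion V V' V'' l) : V' =Θ[𝓝 0] fun x ↦ x :=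
  (hV.deriv_sub_id_isBigO.trans_isLittleO (isLittleO_pow_id (by norm_num))).isEquivalent.isTheta

lemma isTheta_energyCoord (hV : HasQuarticExpansion V V' V'' l) :
    energyCoord V =Θ[𝓝 0] fun x ↦ x :=
  (hV.energyCoord_sub_id_isBigO.trans_isLittleO
    (isLittleO_pow_id (by norm_num))).isEquivalent.isTheta

lemma eventually_deriv_ne_zero (hV : HasQuarticExpansion V V' V'' l) :
    ∀ᶠ x in 𝓝[≠] 0, V' x ≠ 0 := by
  filter_upwards [hV.isTheta_deriv.eq_zero_iff.filter_mono nhdsWithin_le_nhds,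
    self_mem_nhdsWithin] with x hx hx0
  exact hx.not.2 hx0

lemma eventually_energyCoord_ne_zero (hV : HasQuarticExpansion V V' V'' l) :
    ∀ᶠ x in 𝓝[≠] 0, energyCoord V x ≠ 0 := by
  filter_upwards [hV.isTheta_energyCoord.eq_zero_iff.filter_mono nhdsWithin_le_nhds,
    self_mem_nhdsWithin] with x hx hx0
  exact hx.not.2 hx0

lemma eventually_hasDerivAt_energyCoord (hV : HasQuarticExpansion V V' V'' l) :
    ∀ᶠ x in 𝓝[≠] 0, HasDerivAt (energyCoord V) (V' x / energyCoord V x) x := by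
  filter_upwards [hV.hasDerivAt.filter_mono nhdsWithin_le_nhds, hV.eventually_pos,
    self_mem_nhdsWithin] with x hx hVx hx0
  exact hasDerivAt_energyCoord hx0 hVx hx

lemma hasDerivAt_energyCoord_zero (hV : HasQuarticExpansion V V' V'' l) :
    HasDerivAt (energyCoord V) 1 0 := by
  have h := (hasDerivAt_zero_of_isBigO_pow (by norm_num) hV.energyCoord_sub_id_isBigO).fun_add
    (hasDerivAt_id' 0)
  simpa only [sub_add_cancel, zero_add] using h

lemma eventually_hasDerivAt_deriv_energyCoord (hV : HasQuarticExpansion V V' V'' l) :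
    ∀ᶠ x in 𝓝 0, HasDerivAt (energyCoord V) (deriv (energyCoord V) x) x := by
  rw [← nhdsNE_sup_pure, eventually_sup]
  refine ⟨hV.eventually_hasDerivAt_energyCoord.mono fun x hx ↦ hx.differentiableAt.hasDerivAt, ?_⟩
  exact eventually_pure.2 hV.hasDerivAt_energyCoord_zero.differentiableAt.hasDerivAt

lemma deriv_energyCoord_sub_one_isBigO (hV : HasQuarticExpansion V V' V'' l) :
    (fun x ↦ deriv (energyCoord V) x - 1) =O[𝓝 0] fun x ↦ x ^ 2 := by
  refine isBigO_nhds_of_nhdsNE ?_ (by simp [hV.hasDerivAt_energyCoord_zero.deriv])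
  have hsub : (fun x ↦ V' x - energyCoord V x) =O[𝓝 0] fun x ↦ x ^ (2 + 1) :=
    (hV.deriv_sub_id_isBigO.sub hV.energyCoord_sub_id_isBigO).congr_left fun x ↦ by ring
  have hdiv := isBigO_pow_div hsub (by simpa using hV.isTheta_energyCoord)
  refine (hdiv.mono nhdsWithin_le_nhds).congr' ?_ EventuallyEq.rfl
  filter_upwards [hV.eventually_hasDerivAt_energyCoord, hV.eventually_energyCoord_ne_zero]
    with x hx hhx
  rw [hx.deriv, sub_div, div_self hhx]

lemma continuousAt_deriv_energyCoord (hV : HasQuarticExpansion V V' V'' l) :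
    ContinuousAt (deriv (energyCoord V)) 0 := by
  have h := hV.deriv_energyCoord_sub_one_isBigO.trans_tendsto
    ((continuous_pow 2).tendsto' 0 0 (by norm_num))
  rw [ContinuousAt, hV.hasDerivAt_energyCoord_zero.deriv]
  exact tendsto_sub_nhds_zero_iff.1 h

lemma hasStrictDerivAt_energyCoord (hV : HasQuarticExpansion V V' V'' l) :
    HasStrictDerivAt (energyCoord V) 1 0 := by
  have h := hasStrictDerivAt_of_hasDerivAt_of_continuousAt
    hV.eventually_hasDerivAt_deriv_energyCoord hV.continuousAt_deriv_energyCoord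
  rwa [hV.hasDerivAt_energyCoord_zero.deriv] at h

lemma deriv_sq_sub_isBigO (hV : HasQuarticExpansion V V' V'' l) :
    (fun x ↦ V' x ^ 2 - 2 * V x * V'' x + 3 / 2 * l * x ^ 4) =O[𝓝 0] fun x ↦ x ^ 5 := by
  have hV'' : V'' =O[𝓝 0] fun x ↦ x ^ 0 :=
    ((hV.deriv_deriv_isBigO.trans (isBigO_pow_pow (Nat.zero_le 3))).add (isBigO_pow_mul
      (p := fun x ↦ 1 + 3 * l * x ^ 2) (by fun_prop) 0)).congr_left fun x ↦ by ring
  have hV' : (fun x ↦ V' x + (x + l * x ^ 3)) =O[𝓝 0] fun x ↦ x ^ 1 :=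
    ((hV.deriv_isBigO.trans (isBigO_pow_pow (by norm_num))).add (isBigO_pow_mul
      (p := fun x ↦ 2 + 2 * l * x ^ 2) (by fun_prop) 1)).congr_left fun x ↦ by ring
  have h₁ := hV.deriv_isBigO.mul hV'
  have h₂ := (hV.isBigO.mul hV'').const_mul_left 2
  have h₃ := (isBigO_pow_mul (p := fun x ↦ 1 + l * x ^ 2 / 2) (by fun_prop) 2).mul
    hV.deriv_deriv_isBigO
  have h₄ := isBigO_pow_mul (p := fun x ↦ l ^ 2 / 2 * x) (by fun_prop) 5
  simp only [← pow_add] at h₁ h₂ h₃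
  refine (((h₁.sub h₂).sub h₃).sub h₄).congr_left fun x ↦ ?_
  ring

lemma energyCoord_mul_deriv_pow_sub_isBigO (hV : HasQuarticExpansion V V' V'' l) :
    (fun x ↦ energyCoord V x * V' x ^ 3 - x ^ 4) =O[𝓝 0] fun x ↦ x ^ 5 := by
  have hV' : V' =O[𝓝 0] fun x ↦ x ^ 1 := by simpa using hV.isTheta_deriv.isBigO
  have hx : (fun x : ℝ ↦ x) =O[𝓝 0] fun x ↦ x ^ 1 := by simpa using isBigO_refl _ _
  have h₁ := hV.energyCoord_sub_id_isBigO.mul (hV'.pow 3)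
  have h₂ := (hx.mul hV.deriv_sub_id_isBigO).mul
    (((hV'.mul hV').add (hV'.mul hx)).add (hx.mul hx))
  simp only [← pow_mul, ← pow_add] at h₁ h₂
  refine ((h₁.trans (isBigO_pow_pow (by norm_num))).add
    (h₂.trans (isBigO_pow_pow (by norm_num)))).congr_left fun x ↦ ?_
  ring

lemma eventually_hasDerivAt_inv_deriv_energyCoord (hV : HasQuarticExpansion V V' V'' l) :
    ∀ᶠ x in 𝓝[≠] 0, HasDerivAt (fun x ↦ (deriv (energyCoord V) x)⁻¹ + 3 / 2 * l * V x)
      ((V' x ^ 2 - 2 * V x * V'' x + 3 / 2 * l * (energyCoord V x * V' x ^ 3)) /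
        (energyCoord V x * V' x ^ 2)) x := by
  filter_upwards [eventually_eventually_nhdsWithin.2 hV.eventually_hasDerivAt_energyCoord,
    hV.eventually_hasDerivAt_energyCoord, hV.hasDerivAt.filter_mono nhdsWithin_le_nhds,
    hV.hasDerivAt_deriv.filter_mono nhdsWithin_le_nhds, hV.eventually_energyCoord_ne_zero,
    hV.eventually_deriv_ne_zero, hV.eventually_energyCoord_sq.filter_mono nhdsWithin_le_nhds,
    self_mem_nhdsWithin] with x hev hh hVx hV'x hhx hV'0 hsq hx0
  have heq : (fun y ↦ (deriv (energyCoord V) y)⁻¹) =ᶠ[𝓝 x] fun y ↦ energyCoord V y / V' y := by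
    rw [(isOpen_compl_singleton.nhdsWithin_eq hx0)] at hev
    filter_upwards [hev] with y hy
    rw [hy.deriv, inv_div]
  refine (((hh.div hV'x hV'0).congr_of_eventuallyEq heq).add
    (hVx.const_mul (3 / 2 * l))).congr_deriv ?_
  field_simp
  linear_combination -2 * V'' x * hsq

lemma hasDerivAt_inv_deriv_energyCoord_zero (hV : HasQuarticExpansion V V' V'' l) :
    HasDerivAt (fun x ↦ (deriv (energyCoord V) x)⁻¹ + 3 / 2 * l * V x) 0 0 := by
  have hcont := hV.continuousAt_deriv_energyCoord
  have hne : deriv (energyCoord V) 0 ≠ 0 := by simp [hV.hasDerivAt_energyCoord_zero.deriv]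
  have hinv : (fun x ↦ (deriv (energyCoord V) x)⁻¹ - 1) =O[𝓝 0] fun x ↦ x ^ 2 := by
    refine (hV.deriv_energyCoord_sub_one_isBigO.neg_left.mul
      ((hcont.inv₀ hne).tendsto.isBigO_one ℝ)).congr' ?_ (.of_forall fun x ↦ mul_one _)
    filter_upwards [hcont.eventually_ne hne] with x hx
    simp only [Pi.inv_apply]
    field_simp
    ring
  have hdiff : (fun x ↦ (deriv (energyCoord V) x)⁻¹ + 3 / 2 * l * V x - 1) =O[𝓝 0]
      fun x ↦ x ^ 2 := by
    have hVsq : (fun x ↦ 2 * V x) =O[𝓝 0] fun x ↦ x ^ 2 :=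
      ((hV.two_mul_sub_sq_isBigO.trans (isBigO_pow_pow (by norm_num))).add
        (isBigO_refl _ _)).congr_left fun x ↦ by ring
    exact (hinv.add (hVsq.const_mul_left (3 / 4 * l))).congr_left fun x ↦ by ring
  simpa only [sub_add_cancel] using (hasDerivAt_zero_of_isBigO_pow one_lt_two hdiff).add_const 1

lemma isLipschitzBigO_inv_deriv_energyCoord (hV : HasQuarticExpansion V V' V'' l) :
    IsLipschitzBigO 2 fun x ↦ (deriv (energyCoord V) x)⁻¹ + 3 / 2 * l * V x := by
  refine isLipschitzBigO_of_deriv_isBigO ?_ ?_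
  · rw [← nhdsNE_sup_pure, eventually_sup]
    exact ⟨hV.eventually_hasDerivAt_inv_deriv_energyCoord.mono fun x hx ↦ hx.differentiableAt,
      eventually_pure.2 hV.hasDerivAt_inv_deriv_energyCoord_zero.differentiableAt⟩
  have hnum : (fun x ↦ V' x ^ 2 - 2 * V x * V'' x + 3 / 2 * l * (energyCoord V x * V' x ^ 3))
      =O[𝓝 0] fun x ↦ x ^ (2 + 3) :=
    (hV.deriv_sq_sub_isBigO.add
      (hV.energyCoord_mul_deriv_pow_sub_isBigO.const_mul_left (3 / 2 * l))).congr_left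
      fun x ↦ by ring
  have hden : (fun x ↦ energyCoord V x * V' x ^ 2) =Θ[𝓝 0] fun x ↦ x ^ 3 :=
    (hV.isTheta_energyCoord.mul (hV.isTheta_deriv.pow 2)).trans_eventuallyEq
      (.of_forall fun x ↦ by ring)
  refine isBigO_nhds_of_nhdsNE ?_ hV.hasDerivAt_inv_deriv_energyCoord_zero.deriv
  refine ((isBigO_pow_div hnum hden).mono nhdsWithin_le_nhds).congr' ?_ EventuallyEq.rfl
  filter_upwards [hV.eventually_hasDerivAt_inv_deriv_energyCoord] with x hx
  exact hx.deriv.symm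

lemma exists_energyCoord_inverse (hV : HasQuarticExpansion V V' V'' l) :
    ∃ X : ℝ → ℝ, X 0 = 0 ∧ IsLipschitzBigO 0 X ∧ (∀ᶠ x in 𝓝 0, X (energyCoord V x) = x) ∧
      (∀ᶠ u in 𝓝 0, energyCoord V (X u) = u) ∧
      ∀ᶠ u in 𝓝 0, HasDerivAt X (deriv (energyCoord V) (X u))⁻¹ u := by
  have hstrict := hV.hasStrictDerivAt_energyCoord
  set X := hstrict.localInverse (energyCoord V) 1 0 one_ne_zero
  have hXstrict : HasStrictDerivAt X 1 0 := by
    simpa [energyCoord_zero] using hstrict.to_localInverse one_ne_zero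
  have hleft : ∀ᶠ x in 𝓝 0, X (energyCoord V x) = x :=
    hstrict.eventually_left_inverse one_ne_zero
  have hright : ∀ᶠ u in 𝓝 0, energyCoord V (X u) = u := by
    simpa [energyCoord_zero] using hstrict.eventually_right_inverse one_ne_zero
  have hX0 : X 0 = 0 := by simpa [energyCoord_zero] using hleft.self_of_nhds
  have hXlip := isLipschitzBigO_zero_of_hasStrictDerivAt hXstrict
  refine ⟨X, hX0, hXlip, hleft, hright, ?_⟩
  have hXtendsto : Tendsto X (𝓝 0) (𝓝 0) := by
    simpa [ContinuousAt, hX0] using hXlip.eventually_continuousAt.self_of_nhds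
  have hcont := hV.continuousAt_deriv_energyCoord
  have hne : deriv (energyCoord V) 0 ≠ 0 := by simp [hV.hasDerivAt_energyCoord_zero.deriv]
  filter_upwards [hXlip.eventually_continuousAt, eventually_eventually_nhds.2 hright,
    hXtendsto.eventually (hcont.eventually_ne hne),
    hXtendsto.eventually hV.eventually_hasDerivAt_deriv_energyCoord] with u hXu hinv hne hder
  exact hder.of_local_left_inverse hXu hne hinv

lemma exists_parametrization (hV : HasQuarticExpansion V V' V'' l) :
    ∃ X R : ℝ → ℝ, (∀ᶠ x in 𝓝 0, X (energyCoord V x) = x) ∧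
      (∀ᶠ u in 𝓝 0, V (X u) = u ^ 2 / 2) ∧
      (∀ᶠ u in 𝓝 0, HasDerivAt X (R u - 3 / 4 * l * u ^ 2) u) ∧
      R 0 = 1 ∧ IsLipschitzBigO 2 R := by
  obtain ⟨X, hX0, hXlip, hleft, hright, hderiv⟩ := hV.exists_energyCoord_inverse
  have hXtendsto : Tendsto X (𝓝 0) (𝓝 0) := by
    simpa [ContinuousAt, hX0] using hXlip.eventually_continuousAt.self_of_nhds
  have hVX : ∀ᶠ u in 𝓝 0, V (X u) = u ^ 2 / 2 := by
    filter_upwards [hXtendsto.eventually hV.eventually_energyCoord_sq, hright] with u hsq hu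
    rw [hu] at hsq
    linarith
  refine ⟨X, _, hleft, hVX, ?_, ?_,
    hV.isLipschitzBigO_inv_deriv_energyCoord.comp hXlip hX0⟩
  · filter_upwards [hderiv, hVX] with u hu hVu
    refine hu.congr_deriv ?_
    simp only [Function.comp_apply, hVu]
    ring
  · simp [hX0, hV.zero, hV.hasDerivAt_energyCoord_zero.deriv]

end HasQuarticExpansion

/-! ### The period map -/

lemma integral_inv_sqrt_eq_integral_comp_sin {V X X' : ℝ → ℝ} {v : ℝ} (hv : 0 < v)
    (hX : ∀ u ∈ Set.Icc (-v) v, HasDerivAt X (X' u) u) (hX' : ∀ u ∈ Set.Icc (-v) v, 0 ≤ X' u)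
    (hVX : ∀ u ∈ Set.Icc (-v) v, V (X u) = u ^ 2 / 2) :
    √2 * ∫ x in X (-v)..X v, (√(v ^ 2 / 2 - V x))⁻¹ =
      2 * ∫ θ in -(π / 2)..π / 2, X' (v * sin θ) := by
  have hmem : ∀ θ, v * sin θ ∈ Set.Icc (-v) v := fun θ ↦
    ⟨by nlinarith [neg_one_le_sin θ], by nlinarith [sin_le_one θ]⟩
  have hderiv : ∀ θ, HasDerivAt (fun θ ↦ X (v * sin θ)) (X' (v * sin θ) * (v * cos θ)) θ :=
    fun θ ↦ (hX _ (hmem θ)).comp θ ((hasDerivAt_sin θ).const_mul v)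
  have hcos : ∀ θ ∈ Set.Ioo (-(π / 2)) (π / 2), 0 < v * cos θ := fun θ hθ ↦
    mul_pos hv (cos_pos_of_mem_Ioo hθ)
  have hpi : -(π / 2) ≤ π / 2 := by linarith [pi_pos]
  have hsubst := intervalIntegral.integral_comp_mul_deriv_of_deriv_nonneg
    (a := -(π / 2)) (b := π / 2) (g := fun x ↦ (√(v ^ 2 / 2 - V x))⁻¹)
    (fun θ _ ↦ (hderiv θ).continuousAt.continuousWithinAt) (fun θ _ ↦ hderiv θ)
    (fun θ hθ ↦ mul_nonneg (hX' _ (hmem θ))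
      (hcos θ (by rwa [min_eq_left hpi, max_eq_right hpi] at hθ)).le)
  simp only [sin_neg, sin_pi_div_two, mul_neg, mul_one, Function.comp_apply] at hsubst
  rw [← hsubst, ← intervalIntegral.integral_const_mul, ← intervalIntegral.integral_const_mul]
  refine intervalIntegral.integral_congr_Ioo_of_le hpi fun θ hθ ↦ ?_
  have hsqrt : √(v ^ 2 / 2 - V (X (v * sin θ))) = v * cos θ / √2 := by
    rw [hVX _ (hmem θ), ← sqrt_sq (hcos θ hθ).le, ← sqrt_div (sq_nonneg _), mul_pow, mul_pow,
      cos_sq']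
    ring_nf
  have hcosθ : cos θ ≠ 0 := (cos_pos_of_mem_Ioo hθ).ne'
  simp only [hsqrt]
  field_simp
  rw [sq_sqrt zero_le_two, mul_comm]

lemma integral_sin_sq_neg_pi_div_two_pi_div_two :
    ∫ θ in -(π / 2)..π / 2, sin θ ^ 2 = π / 2 := by
  simp [integral_sin_sq]

/-- The period defect `2π - T v`, divided by the coefficient `3πl/4` of its leading term `v²`. -/
noncomputable def periodDefect (l : ℝ) (T : ℝ → ℝ) (v : ℝ) : ℝ :=
  (2 * π - T v) / (3 * π / 4 * l)

lemma periodDefect_eq_iff {T : ℝ → ℝ} {l n t v : ℝ} (hl : l ≠ 0) (hn : n ≠ 0) :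
    periodDefect l T v = 8 * t / (3 * π * n) ↔ T v = 2 * π - 2 * l * t / n := by
  have h : 8 * t / (3 * π * n) * (3 * π / 4 * l) = 2 * l * t / n := by
    field_simp
    ring
  rw [periodDefect, div_eq_iff (by positivity), h]
  constructor <;> intro <;> linarith

lemma half_mul_sub_eq_neg_mul_periodDefect_sub {T : ℝ → ℝ} {l n : ℝ} (hl : l ≠ 0) (hn : n ≠ 0)
    (t u v : ℝ) :
    n / 2 * T u - (n * π - l * t + l * t * (1 - v ^ 2)) =
      -(n * (3 * π / 8 * l) * (periodDefect l T u - 8 * t / (3 * π * n) * v ^ 2)) := by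
  rw [periodDefect]
  field_simp
  ring

/-- `T` is the period map near `0` of the oscillator with potential `V`: the amplitude `v` is the
speed at the bottom of the well, `xm v ≤ 0 ≤ xM v` are the turning points, where `V = v² / 2`,
and `T 0` is the limit value for small oscillations. -/
structure IsPeriodMap (V xm xM T : ℝ → ℝ) : Prop where
  eventually_turningPoints :
    ∀ᶠ v in 𝓝[≠] 0, xm v ≤ 0 ∧ 0 ≤ xM v ∧ V (xm v) = v ^ 2 / 2 ∧ V (xM v) = v ^ 2 / 2
  tendsto_left : Tendsto xm (𝓝[≠] 0) (𝓝 0)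
  tendsto_right : Tendsto xM (𝓝[≠] 0) (𝓝 0)
  zero : T 0 = 2 * π
  eventually_eq_integral :
    ∀ᶠ v in 𝓝[≠] 0, T v = √2 * ∫ x in xm v..xM v, (√(v ^ 2 / 2 - V x))⁻¹

namespace IsPeriodMap

variable {V xm xM T X : ℝ → ℝ} {l : ℝ}

lemma eventually_eq_comp_abs (hT : IsPeriodMap V xm xM T) (hV0 : V 0 = 0)
    (hX : ∀ᶠ x in 𝓝 0, X (energyCoord V x) = x) :
    ∀ᶠ v in 𝓝[≠] 0, xm v = X (-|v|) ∧ xM v = X |v| := by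
  filter_upwards [hT.eventually_turningPoints, hT.tendsto_left.eventually hX,
    hT.tendsto_right.eventually hX, self_mem_nhdsWithin] with v ⟨hm, hM, hVm, hVM⟩ hXm hXM hv
  have hV_ne : (0 : ℝ) ≠ v ^ 2 / 2 := (div_pos (sq_pos_iff.2 hv) two_pos).ne
  have hm' : xm v < 0 := hm.lt_of_ne fun h ↦ hV_ne (by rw [← hVm, h, hV0])
  have hM' : 0 < xM v := hM.lt_of_ne fun h ↦ hV_ne (by rw [← hVM, ← h, hV0])
  rw [energyCoord_of_neg V hm', hVm, mul_div_cancel₀ _ two_ne_zero, sqrt_sq_eq_abs] at hXm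
  rw [energyCoord_of_pos V hM', hVM, mul_div_cancel₀ _ two_ne_zero, sqrt_sq_eq_abs] at hXM
  exact ⟨hXm.symm, hXM.symm⟩

lemma eventually_eq_integral_comp_sin {X' : ℝ → ℝ} (hT : IsPeriodMap V xm xM T) (hV0 : V 0 = 0)
    (hXh : ∀ᶠ x in 𝓝 0, X (energyCoord V x) = x) (hVX : ∀ᶠ u in 𝓝 0, V (X u) = u ^ 2 / 2)
    (hX : ∀ᶠ u in 𝓝 0, HasDerivAt X (X' u) u) (hX' : ∀ᶠ u in 𝓝 0, 0 ≤ X' u) :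
    ∀ᶠ v in 𝓝[≠] 0, T v = 2 * ∫ θ in -(π / 2)..π / 2, X' (|v| * sin θ) := by
  obtain ⟨r, hr, hball⟩ := Metric.eventually_nhds_iff_ball.1 (hX.and (hX'.and hVX))
  filter_upwards [hT.eventually_eq_comp_abs hV0 hXh, hT.eventually_eq_integral,
    self_mem_nhdsWithin, nhdsWithin_le_nhds (Metric.ball_mem_nhds (0 : ℝ) hr)]
    with v ⟨hm, hM⟩ hTv hv hvr
  have hmem : ∀ u ∈ Set.Icc (-|v|) |v|, u ∈ Metric.ball (0 : ℝ) r := fun u hu ↦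
    mem_ball_zero_iff.2 ((abs_le.2 hu).trans_lt (mem_ball_zero_iff.1 hvr))
  rw [hTv, hm, hM, ← sq_abs v]
  exact integral_inv_sqrt_eq_integral_comp_sin (abs_pos.2 hv) (fun u hu ↦ (hball u (hmem u hu)).1)
    (fun u hu ↦ (hball u (hmem u hu)).2.1) (fun u hu ↦ (hball u (hmem u hu)).2.2)

lemma isLipschitzBigO {V' V'' : ℝ → ℝ} (hT : IsPeriodMap V xm xM T)
    (hV : HasQuarticExpansion V V' V'' l) :
    IsLipschitzBigO 2 fun v ↦ T v + 3 * π / 4 * l * v ^ 2 := by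
  obtain ⟨X, R, hXh, hVX, hX, hR0, hR⟩ := hV.exists_parametrization
  have habs_sin : ∀ θ, |sin θ| ≤ 1 := abs_sin_le_one
  have hmean := ((hR.intervalIntegral_comp_mul continuous_sin habs_sin (-(π / 2)) (π / 2)).comp
    isLipschitzBigO_zero_abs abs_zero).const_mul 2
  refine hmean.congr ?_
  have hX' : ∀ᶠ u in 𝓝 0, 0 ≤ R u - 3 / 4 * l * u ^ 2 := by
    have hcont : ContinuousAt (fun u ↦ R u - 3 / 4 * l * u ^ 2) 0 :=
      hR.eventually_continuousAt.self_of_nhds.sub (by fun_prop)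
    exact (hcont.eventually (lt_mem_nhds (by simp [hR0]))).mono fun u hu ↦ hu.le
  have hint := (continuous_abs.tendsto' 0 0 abs_zero).eventually
    (hR.eventually_intervalIntegrable_comp_mul continuous_sin habs_sin (-(π / 2)) (π / 2))
  rw [EventuallyEq, ← nhdsNE_sup_pure, eventually_sup]
  refine ⟨?_, ?_⟩
  · filter_upwards [hT.eventually_eq_integral_comp_sin hV.zero hXh hVX hX hX',
      hint.filter_mono nhdsWithin_le_nhds] with v hTv hintv
    rw [hTv, intervalIntegral.integral_sub hintv
      (Continuous.intervalIntegrable (by fun_prop) _ _)]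
    simp only [mul_pow, sq_abs, Function.comp_apply, intervalIntegral.integral_const_mul,
      integral_sin_sq_neg_pi_div_two_pi_div_two]
    ring
  · simp [hT.zero, hR0]

lemma isLipschitzBigO_periodDefect {V' V'' : ℝ → ℝ} (hT : IsPeriodMap V xm xM T)
    (hV : HasQuarticExpansion V V' V'' l) (hl : l ≠ 0) :
    IsLipschitzBigO 2 fun v ↦ periodDefect l T v - v ^ 2 := by
  have h := ((hT.isLipschitzBigO hV).const_mul (-(3 * π / 4 * l)⁻¹)).add_const
    (2 * π / (3 * π / 4 * l))
  refine h.congr (.of_forall fun v ↦ ?_)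
  simp only [periodDefect]
  field_simp
  ring

end IsPeriodMap

lemma mul_div_rpow_three_half {n t : ℝ} (hn : 0 < n) (ht : 0 ≤ t) :
    n * (t / n) ^ ((3 : ℝ) / 2) = t ^ ((3 : ℝ) / 2) / √n := by
  rw [div_rpow ht hn.le, rpow_div_two_eq_sqrt 3 hn.le]
  norm_cast
  field_simp
  rw [sq_sqrt hn.le, mul_comm]

theorem statement16_general {V V' V'' xm xM T : ℝ → ℝ} {l : ℝ} (hl : l ≠ 0)
    (hV : HasQuarticExpansion V V' V'' l) (hT : IsPeriodMap V xm xM T) :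
    ∃ K > (0 : ℝ), ∃ C > (0 : ℝ), ∃ r > (0 : ℝ),
      ∀ n : ℝ, 0 < n → ∀ t : ℝ, 0 < t → t ≤ K * n →
        ∃ γ : ℝ, 0 < γ ∧ γ < r ∧ T γ = 2 * π - 2 * l * t / n ∧
          (∀ γ' : ℝ, 0 < γ' → γ' < r → T γ' = 2 * π - 2 * l * t / n → γ' = γ) ∧
          |γ ^ 2 - 8 * t / (3 * π * n)| ≤ C * (t / n) ^ ((3 : ℝ) / 2) ∧
          γ ≤ C * √(t / n) ∧
          ∀ v ∈ Set.Icc (-1 : ℝ) 1,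
            |n / 2 * T (γ * v) - (n * π - l * t + l * t * (1 - v ^ 2))|
              ≤ C * t ^ ((3 : ℝ) / 2) / √n := by
  obtain ⟨K, hK, C, hC, r, hr, hγ⟩ :=
    exists_scalingVelocity (by simp [periodDefect, hT.zero]) (hT.isLipschitzBigO_periodDefect hV hl)
  refine ⟨K, hK, C * (1 + 3 * π / 8 * |l|), by positivity, r, hr, fun n hn t ht htK ↦ ?_⟩
  have hC_le : C ≤ C * (1 + 3 * π / 8 * |l|) :=
    le_mul_of_one_le_right hC.le (le_add_of_nonneg_right (by positivity))
  have hs_le : 8 * t / (3 * π * n) ≤ t / n := by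
    rw [div_le_div_iff₀ (by positivity) hn]
    nlinarith [pi_gt_three, mul_pos ht hn]
  obtain ⟨γ, hγ0, hγr, hTγ, hunique, hsq, hsqrt, herr⟩ :=
    hγ (8 * t / (3 * π * n)) (by positivity) (hs_le.trans ((div_le_iff₀ hn).2 htK))
  simp only [periodDefect_eq_iff hl hn.ne'] at hTγ hunique
  refine ⟨γ, hγ0, hγr, hTγ, hunique, hsq.trans (by gcongr), hsqrt.trans (by gcongr),
    fun v hv ↦ ?_⟩
  calc |n / 2 * T (γ * v) - (n * π - l * t + l * t * (1 - v ^ 2))|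
      ≤ n * (3 * π / 8 * |l|) * (C * (8 * t / (3 * π * n)) ^ ((3 : ℝ) / 2)) := by
        rw [half_mul_sub_eq_neg_mul_periodDefect_sub hl hn.ne', abs_neg, abs_mul, abs_mul, abs_mul,
          abs_of_pos hn, abs_of_pos (by positivity : 0 < 3 * π / 8)]
        gcongr
        exact herr v hv
    _ ≤ n * (1 + 3 * π / 8 * |l|) * (C * (t / n) ^ ((3 : ℝ) / 2)) := by
        gcongr
        exact le_add_of_nonneg_left zero_le_one
    _ = C * (1 + 3 * π / 8 * |l|) * (n * (t / n) ^ ((3 : ℝ) / 2)) := by ring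
    _ = C * (1 + 3 * π / 8 * |l|) * t ^ ((3 : ℝ) / 2) / √n := by
        rw [mul_div_rpow_three_half hn ht.le, ← mul_div_assoc]

lemma PerturbedQuartic.hasQuarticExpansion {V f : ℝ → ℝ} {l : ℝ} (hV : PerturbedQuartic V f l) :
    HasQuarticExpansion V (fun x ↦ x + l * x ^ 3 + deriv f x)
      (fun x ↦ 1 + 3 * l * x ^ 2 + iteratedDeriv 2 f x) l := by
  obtain ⟨-, hf, hVf, hO⟩ := hV
  have hO' : ∀ i ≤ 5, iteratedDeriv i f =O[𝓝 0] fun x : ℝ ↦ x ^ (5 - i) := fun i hi ↦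
    (hO i hi).trans (isBigO_of_le _ fun x ↦ by simp)
  have hf' : ∀ x, HasDerivAt f (deriv f x) x := fun x ↦
    (hf.differentiable (by norm_num) x).hasDerivAt
  have hf'' : ∀ x, HasDerivAt (deriv f) (iteratedDeriv 2 f x) x := fun x ↦ by
    have := (hf.differentiable_iteratedDeriv 1 (by norm_num) x).hasDerivAt
    rwa [← iteratedDeriv_succ, iteratedDeriv_one] at this
  refine ⟨.of_forall fun x ↦ ?_, .of_forall fun x ↦ ?_, ?_, ?_, ?_⟩
  · rw [funext hVf]
    refine ((((hasDerivAt_pow 2 x).div_const 2).add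
      (((hasDerivAt_pow 4 x).const_mul l).div_const 4)).add (hf' x)).congr_deriv ?_
    norm_num
    ring
  · refine (((hasDerivAt_id' x).add ((hasDerivAt_pow 3 x).const_mul l)).add
      (hf'' x)).congr_deriv ?_
    norm_num
    ring
  · simpa [hVf] using hO' 0 (by norm_num)
  · simpa using hO' 1 (by norm_num)
  · simpa using hO' 2 (by norm_num)

/-- the `(n,t)`-scaling velocity `γ_{n,t} > 0` defined by
`T(γ_{n,t}) = 2π - 2ℓt/n` is well defined for `t ∈ (0, Kn]`, with
`|γ_{n,t}² - 8t/(3πn)| ≤ C(t/n)^{3/2}` (so `γ_{n,t} = O((t/n)^{1/2})`) and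
`|(n/2)T(γ_{n,t}v) - (nπ - ℓt + ℓt(1-v²))| ≤ C t^{3/2}/n^{1/2}` for `v ∈ [-1,1]`. -/
theorem statement16 (V f : ℝ → ℝ) (l : ℝ) (hV : PerturbedQuartic V f l)
    (v₁ : ℝ) (hv₁ : 0 < v₁)
    -- the extreme points `x^m(v) ≤ 0 ≤ x^M(v)`, determined near 0 by
    -- `V(x^m(v)) = V(x^M(v)) = v²/2`:
    (xm xM : ℝ → ℝ)
    (hext : ∀ v : ℝ, 0 < |v| → |v| < v₁ → xm v ≤ 0 ∧ 0 ≤ xM v ∧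
      V (xm v) = v ^ 2 / 2 ∧ V (xM v) = v ^ 2 / 2)
    (hnear_m : Filter.Tendsto xm (𝓝 0) (𝓝 0))
    (hnear_M : Filter.Tendsto xM (𝓝 0) (𝓝 0))
    -- the period map `T(v) = √2 ∫_{x^m(v)}^{x^M(v)} (v²/2 - V(x))^{-1/2} dx`, `T(0) = 2π`:
    (T : ℝ → ℝ) (hT0 : T 0 = 2 * Real.pi)
    (hT : ∀ v : ℝ, 0 < |v| → |v| < v₁ →
      T v = Real.sqrt 2 * ∫ x in (xm v)..(xM v), (Real.sqrt (v ^ 2 / 2 - V x))⁻¹) :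
    ∃ K > (0 : ℝ), ∃ C > (0 : ℝ), ∃ v₂ > (0 : ℝ),
      ∀ n : ℕ, 1 ≤ n → ∀ t : ℝ, 0 < t → t ≤ K * (n : ℝ) →
        ∃ γ : ℝ, 0 < γ ∧ γ < v₂ ∧
          -- (i) well defined:
          T γ = 2 * Real.pi - 2 * l * t / (n : ℝ) ∧
          (∀ γ' : ℝ, 0 < γ' → γ' < v₂ → T γ' = 2 * Real.pi - 2 * l * t / (n : ℝ) → γ' = γ) ∧
          -- (ii):
          |γ ^ 2 - 8 * t / (3 * Real.pi * (n : ℝ))| ≤ C * (t / (n : ℝ)) ^ ((3 : ℝ) / 2) ∧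
          γ ≤ C * Real.sqrt (t / (n : ℝ)) ∧
          -- (iii):
          (∀ v ∈ Set.Icc (-1 : ℝ) 1,
            |(n : ℝ) / 2 * T (γ * v) - ((n : ℝ) * Real.pi - l * t + l * t * (1 - v ^ 2))|
              ≤ C * t ^ ((3 : ℝ) / 2) / Real.sqrt (n : ℝ)) := by
  have hball : ∀ᶠ v in 𝓝[≠] (0 : ℝ), 0 < |v| ∧ |v| < v₁ := by
    filter_upwards [self_mem_nhdsWithin, nhdsWithin_le_nhds (Metric.ball_mem_nhds (0 : ℝ) hv₁)]
      with v hv hvv₁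
    exact ⟨abs_pos.2 hv, mem_ball_zero_iff.1 hvv₁⟩
  have hperiod : IsPeriodMap V xm xM T :=
    { eventually_turningPoints := hball.mono fun v hv ↦ hext v hv.1 hv.2
      tendsto_left := hnear_m.mono_left nhdsWithin_le_nhds
      tendsto_right := hnear_M.mono_left nhdsWithin_le_nhds
      zero := hT0
      eventually_eq_integral := hball.mono fun v hv ↦ hT v hv.1 hv.2 }
  have hl : l ≠ 0 := by rcases hV.1 with rfl | rfl <;> norm_num
  obtain ⟨K, hK, C, hC, r, hr, h⟩ := statement16_general hl hV.hasQuarticExpansion hperiod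
  exact ⟨K, hK, C, hC, r, hr, fun n hn ↦ h n (Nat.cast_pos.2 hn)⟩
end

section
/- Let V be a C⁵ perturbed quartic potential with ℓ ∈ {−1,1} equal to the sign of V⁽⁴⁾(0), and let Γ_{n,t} = (8t/(3πn))^{1/2}. There exist K > 0, C > 0 and N ≥ 1 such that for every integer n ≥ N, every v ∈ [−1,1] and every t ∈ (0, K n^{3/5}]: the solution x(Γ_{n,t}v; ·) of ẍ = −V'(x) with initial position 0 and initial velocity Γ_{n,t}v is defined at time t and satisfies |x(Γ_{n,t}v; t) − Γ_{n,t} v sin t| ≤ C Γ_{n,t}³ t. -/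
open Real Filter Asymptotics Topology

/-- `x v` is the solution of the Euler--Lagrange equation `ẍ = -V'(x)` with
initial conditions `x(v;0) = 0`, `ẋ(v;0) = v`, for every `|v| ≤ v₀`. -/
def SolutionFamily (V : ℝ → ℝ) (x : ℝ → ℝ → ℝ) (v₀ : ℝ) : Prop :=
  ∀ v : ℝ, |v| ≤ v₀ → ContDiff ℝ 2 (x v) ∧ x v 0 = 0 ∧ deriv (x v) 0 = v ∧
    ∀ t : ℝ, deriv (deriv (x v)) t = -(deriv V (x v t))

/-!
Energy conservation keeps a small motion `y` inside the region where `V x - V 0 ≥ ‖x‖² / 8`, so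
that `‖y‖ ≤ 2 ‖ẏ 0‖` for all times. There `ÿ = -∇V y` is the harmonic oscillator
perturbed by a force of size `O(‖ẏ 0‖ᵏ)`. Differentiating `sin (t - s) ẏ s + cos (t - s) y s` in
`s`, the oscillator part cancels and only the perturbation remains, hence the mean value inequality
bounds the distance to the harmonic motion by `O(‖ẏ 0‖ᵏ) |t|`. With `K` small, `t ≤ K n` makes
`Γ_{n,t}` as small as needed.
-/

/-- `y` and `p` are the position and velocity, at all times, of a unit point mass in the force field
`F`: Newton's equation `ÿ = F y`, written as a first-order system. -/
structure NewtonMotion {E : Type*} [NormedAddCommGroup E] [NormedSpace ℝ E]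
    (F : E → E) (y p : ℝ → E) : Prop where
  hasDerivAt_position : ∀ s, HasDerivAt y (p s) s
  hasDerivAt_velocity : ∀ s, HasDerivAt p (F (y s)) s

namespace NewtonMotion

section NormedSpace

variable {E : Type*} [NormedAddCommGroup E] [NormedSpace ℝ E] {F : E → E} {y p : ℝ → E}

lemma hasDerivAt_sin_smul_add_cos_smul (h : NewtonMotion F y p) (t s : ℝ) :
    HasDerivAt (fun s => sin (t - s) • p s + cos (t - s) • y s)
      (sin (t - s) • (F (y s) + y s)) s := by
  have hts : HasDerivAt (fun s => t - s) (-1) s := (hasDerivAt_id s).const_sub t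
  refine ((hts.sin.smul (h.hasDerivAt_velocity s)).add
    (hts.cos.smul (h.hasDerivAt_position s))).congr_deriv ?_
  module

theorem norm_sub_cos_smul_sub_sin_smul_le (h : NewtonMotion F y p) {t C : ℝ}
    (hC : ∀ s ∈ Set.uIcc 0 t, ‖F (y s) + y s‖ ≤ C) :
    ‖y t - cos t • y 0 - sin t • p 0‖ ≤ C * |t| := by
  have hbound : ∀ s ∈ Set.uIcc 0 t, ‖sin (t - s) • (F (y s) + y s)‖ ≤ C := fun s hs =>
    calc ‖sin (t - s) • (F (y s) + y s)‖ = |sin (t - s)| * ‖F (y s) + y s‖ := norm_smul _ _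
      _ ≤ ‖F (y s) + y s‖ := mul_le_of_le_one_left (norm_nonneg _) (abs_sin_le_one _)
      _ ≤ C := hC s hs
  have hmean := Convex.norm_image_sub_le_of_norm_hasDerivWithin_le
    (fun s _ => (h.hasDerivAt_sin_smul_add_cos_smul t s).hasDerivWithinAt) hbound
    (convex_uIcc 0 t) Set.left_mem_uIcc Set.right_mem_uIcc
  simpa [sub_sub, add_comm] using hmean

end NormedSpace

section Potential

variable {E : Type*} [NormedAddCommGroup E] [InnerProductSpace ℝ E] [CompleteSpace E]
  {V : E → ℝ} {y p : ℝ → E}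

theorem energy_eq (hV : Differentiable ℝ V) (h : NewtonMotion (fun x => -gradient V x) y p)
    (s t : ℝ) : ‖p s‖ ^ 2 / 2 + V (y s) = ‖p t‖ ^ 2 / 2 + V (y t) := by
  have hpower (r : ℝ) : HasDerivAt (fun r => ‖p r‖ ^ 2 / 2 + V (y r)) 0 r := by
    refine (((h.hasDerivAt_velocity r).norm_sq.div_const 2).add
      ((hV (y r)).hasFDerivAt.comp_hasDerivAt r (h.hasDerivAt_position r))).congr_deriv ?_
    rw [← inner_gradient_left, inner_neg_right, real_inner_comm]
    ring
  exact is_const_of_deriv_eq_zero (fun r => (hpower r).differentiableAt)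
    (fun r => (hpower r).deriv) s t

theorem mul_norm_le_norm_velocity (hV : Differentiable ℝ V)
    (h : NewtonMotion (fun x => -gradient V x) y p) (hy₀ : y 0 = 0) {a δ : ℝ} (ha : 0 < a)
    (hcoercive : ∀ x, ‖x‖ ≤ δ → (a * ‖x‖) ^ 2 / 2 ≤ V x - V 0) (hp₀ : ‖p 0‖ < a * δ) (s : ℝ) :
    a * ‖y s‖ ≤ ‖p 0‖ := by
  by_contra! hs
  -- The motion would have to cross a sphere of radius at most `δ` whose potential energy exceeds
  -- the total energy.
  obtain ⟨r, hr : ‖y r‖ = min δ ‖y s‖⟩ : min δ ‖y s‖ ∈ Set.range (‖y ·‖) := by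
    have hcont : Continuous y :=
      continuous_iff_continuousAt.2 fun r => (h.hasDerivAt_position r).continuousAt
    have hδ : 0 ≤ δ := (pos_of_mul_pos_right ((norm_nonneg _).trans_lt hp₀) ha.le).le
    exact mem_range_of_exists_le_of_exists_ge hcont.norm
      ⟨0, by simp [hy₀, hδ]⟩ ⟨s, min_le_right _ _⟩
  have hfar : ‖p 0‖ < a * ‖y r‖ := by
    rw [hr, mul_min_of_nonneg _ _ ha.le]
    exact lt_min hp₀ hs
  have henergy := h.energy_eq hV r 0
  rw [hy₀] at henergy
  have hcoercive_r := hcoercive (y r) (hr.trans_le (min_le_left _ _))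
  have hsq : ‖p 0‖ ^ 2 < (a * ‖y r‖) ^ 2 := by gcongr
  linarith [sq_nonneg ‖p r‖]

end Potential

end NewtonMotion

section NearHarmonic

variable {E : Type*} [NormedAddCommGroup E] [InnerProductSpace ℝ E] [CompleteSpace E] {V : E → ℝ}

lemma hasGradientAt_sub_norm_sq_div_two {x : E} (hV : DifferentiableAt ℝ V x) :
    HasGradientAt (fun z => V z - ‖z‖ ^ 2 / 2) (gradient V x - x) x := by
  have hnorm_sq : HasFDerivAt (fun z : E => ‖z‖ ^ 2 / 2) (innerSL ℝ x) x := by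
    simp only [div_eq_inv_mul]
    refine ((hasStrictFDerivAt_norm_sq x).hasFDerivAt.const_mul (2⁻¹ : ℝ)).congr_fderiv ?_
    module
  rw [hasGradientAt_iff_hasFDerivAt, map_sub, toDual_gradient]
  exact hV.hasFDerivAt.sub hnorm_sq

lemma abs_sub_sub_norm_sq_div_two_le (hV : Differentiable ℝ V) {c δ : ℝ} (hc : 0 ≤ c)
    (hgrad : ∀ x, ‖x‖ ≤ δ → ‖gradient V x - x‖ ≤ c * ‖x‖) {x : E} (hx : ‖x‖ ≤ δ) :
    |V x - V 0 - ‖x‖ ^ 2 / 2| ≤ c * ‖x‖ ^ 2 := by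
  have hbound : ∀ z ∈ Metric.closedBall 0 ‖x‖,
      ‖InnerProductSpace.toDual ℝ E (gradient V z - z)‖ ≤ c * ‖x‖ := fun z hz => by
    rw [mem_closedBall_zero_iff] at hz
    rw [LinearIsometryEquiv.norm_map]
    exact (hgrad z (hz.trans hx)).trans (by gcongr)
  have hmean := (convex_closedBall 0 ‖x‖).norm_image_sub_le_of_norm_hasFDerivWithin_le
    (fun z _ => (hasGradientAt_sub_norm_sq_div_two (hV z)).hasFDerivAt.hasFDerivWithinAt)
    hbound (Metric.mem_closedBall_self (norm_nonneg x)) (y := x) (by simp)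
  simpa [sub_right_comm, pow_two, mul_assoc] using hmean

theorem exists_norm_sub_sin_smul_le {k : ℕ} (hk : 1 < k) (hV : Differentiable ℝ V)
    (hgrad : (fun x => gradient V x - x) =O[𝓝 0] fun x => ‖x‖ ^ k) :
    ∃ δ > 0, ∃ C > 0, ∀ y p : ℝ → E, NewtonMotion (fun x => -gradient V x) y p → y 0 = 0 →
      ‖p 0‖ < δ → ∀ t, ‖y t - sin t • p 0‖ ≤ C * ‖p 0‖ ^ k * |t| := by
  obtain ⟨M, hM, hbig⟩ := hgrad.exists_pos
  have hlittle := (hgrad.trans_isLittleO (isLittleO_norm_pow_id hk)).bound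
    (show (0 : ℝ) < 3 / 8 by norm_num)
  obtain ⟨δ, hδ, hball⟩ := Metric.nhds_basis_closedBall.eventually_iff.1 (hbig.bound.and hlittle)
  simp only [mem_closedBall_zero_iff, norm_pow, norm_norm] at hball
  have hcoercive (x : E) (hx : ‖x‖ ≤ δ) : (1 / 2 * ‖x‖) ^ 2 / 2 ≤ V x - V 0 := by
    have := abs_le.1 (abs_sub_sub_norm_sq_div_two_le hV (by norm_num) (fun z hz => (hball hz).2) hx)
    linarith
  refine ⟨1 / 2 * δ, by positivity, M * 2 ^ k, by positivity, fun y p h hy₀ hp₀ t => ?_⟩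
  have hsmall (s : ℝ) : ‖y s‖ ≤ 2 * ‖p 0‖ := by
    linarith [h.mul_norm_le_norm_velocity hV hy₀ one_half_pos hcoercive hp₀ s]
  have hforce (s : ℝ) : ‖-gradient V (y s) + y s‖ ≤ M * 2 ^ k * ‖p 0‖ ^ k :=
    calc ‖-gradient V (y s) + y s‖ = ‖gradient V (y s) - y s‖ := by
          rw [neg_add_eq_sub, norm_sub_rev]
      _ ≤ M * ‖y s‖ ^ k := (hball (by linarith [hsmall s])).1
      _ ≤ M * (2 * ‖p 0‖) ^ k := by gcongr; exact hsmall s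
      _ = M * 2 ^ k * ‖p 0‖ ^ k := by rw [mul_pow, mul_assoc]
  simpa [hy₀] using h.norm_sub_cos_smul_sub_sin_smul_le (t := t) fun s _ => hforce s

end NearHarmonic

namespace PerturbedQuartic

variable {V f : ℝ → ℝ} {l : ℝ}

lemma hasDerivAt (hV : PerturbedQuartic V f l) (x : ℝ) :
    HasDerivAt V (x + l * x ^ 3 + deriv f x) x := by
  obtain ⟨-, hf, hVf, -⟩ := hV
  rw [funext hVf]
  refine ((((hasDerivAt_pow 2 x).div_const 2).add
    (((hasDerivAt_pow 4 x).const_mul l).div_const 4)).add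
    (hf.differentiable (by norm_num) x).hasDerivAt).congr_deriv ?_
  norm_num
  ring

lemma differentiable (hV : PerturbedQuartic V f l) : Differentiable ℝ V :=
  fun x => (hV.hasDerivAt x).differentiableAt

theorem isBigO_deriv_sub_id (hV : PerturbedQuartic V f l) :
    (fun x => deriv V x - x) =O[𝓝 0] fun x => x ^ 3 := by
  have hquartic : (fun x => l * x ^ 3) =O[𝓝 0] fun x : ℝ => x ^ 3 := isBigO_const_mul_self ..
  have hf' : deriv f =O[𝓝 0] fun x : ℝ => x ^ 3 := by
    have hf'₄ := hV.2.2.2 1 (by norm_num)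
    rw [iteratedDeriv_one] at hf'₄
    simp only [← abs_pow] at hf'₄
    exact hf'₄.of_abs_right.trans (isLittleO_pow_pow (by norm_num)).isBigO
  refine (hquartic.add hf').congr_left fun x => ?_
  rw [(hV.hasDerivAt x).deriv]
  ring

end PerturbedQuartic

lemma SolutionFamily.newtonMotion {V : ℝ → ℝ} {x : ℝ → ℝ → ℝ} {v₀ v : ℝ}
    (hx : SolutionFamily V x v₀) (hv : |v| ≤ v₀) :
    NewtonMotion (fun z => -gradient V z) (x v) (deriv (x v)) := by
  obtain ⟨hsmooth, -, -, hode⟩ := hx v hv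
  refine ⟨fun s => (hsmooth.differentiable (by norm_num) s).hasDerivAt, fun s => ?_⟩
  rw [gradient_eq_deriv', ← hode]
  exact (hsmooth.differentiable_deriv_two s).hasDerivAt

lemma sqrt_scaling_lt {κ t n : ℝ} (hκ : 0 < κ) (ht : t ∈ Set.Ioc 0 (κ ^ 2 * n)) :
    √(8 * t / (3 * π * n)) < κ := by
  have hn : 0 < n := pos_of_mul_pos_right (ht.1.trans_le ht.2) (sq_nonneg κ)
  rw [sqrt_lt' hκ, div_lt_iff₀ (by positivity)]
  calc 8 * t < 3 * π * t := by nlinarith [ht.1, pi_gt_three]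
    _ ≤ 3 * π * (κ ^ 2 * n) := by gcongr; exact ht.2
    _ = κ ^ 2 * (3 * π * n) := by ring

theorem statement18_general {V : ℝ → ℝ} (hV : Differentiable ℝ V)
    (hV' : (fun x => deriv V x - x) =O[𝓝 0] fun x => x ^ 3)
    {v₁ : ℝ} (hv₁ : 0 < v₁) {x : ℝ → ℝ → ℝ} (hx : SolutionFamily V x v₁) :
    ∃ K > (0 : ℝ), ∃ C > (0 : ℝ), ∀ n : ℕ, ∀ v ∈ Set.Icc (-1 : ℝ) 1, ∀ t ∈ Set.Ioc 0 (K * n),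
      |√(8 * t / (3 * π * n)) * v| ≤ v₁ ∧
      |x (√(8 * t / (3 * π * n)) * v) t - √(8 * t / (3 * π * n)) * v * sin t|
        ≤ C * √(8 * t / (3 * π * n)) ^ 3 * t := by
  have hgrad : (fun x => gradient V x - x) =O[𝓝 0] fun x : ℝ => ‖x‖ ^ 3 := by
    simpa only [gradient_eq_deriv', ← norm_pow] using hV'.norm_right
  obtain ⟨δ, hδ, C, hC, hdeviation⟩ := exists_norm_sub_sin_smul_le (by norm_num) hV hgrad
  refine ⟨min v₁ δ ^ 2, by positivity, C, hC, fun n v hv t ht => ?_⟩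
  have hΓ := sqrt_scaling_lt (lt_min hv₁ hδ) ht
  set Γ := √(8 * t / (3 * π * n))
  have hΓv : |Γ * v| ≤ Γ := by
    rw [abs_mul, abs_of_nonneg (sqrt_nonneg _)]
    exact mul_le_of_le_one_right (sqrt_nonneg _) (abs_le.2 hv)
  have hadmissible : |Γ * v| ≤ v₁ := (hΓv.trans_lt (lt_min_iff.1 hΓ).1).le
  have hsmall : |Γ * v| < δ := hΓv.trans_lt (lt_min_iff.1 hΓ).2
  obtain ⟨-, hx₀, hx₁, -⟩ := hx _ hadmissible
  have hdev := hdeviation _ _ (hx.newtonMotion hadmissible) hx₀ (by rwa [hx₁]) t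
  rw [hx₁, norm_eq_abs, norm_eq_abs, smul_eq_mul, mul_comm (sin t), abs_of_pos ht.1] at hdev
  exact ⟨hadmissible, hdev.trans (by have := ht.1; gcongr)⟩

/-- with `Γ_{n,t} = (8t/(3πn))^{1/2}`, the solution with initial
velocity `Γ_{n,t}v` satisfies `|x(Γ_{n,t}v; t) - Γ_{n,t}v sin t| ≤ C Γ_{n,t}³ t`
for all `n ≥ N`, `v ∈ [-1,1]` and `t ∈ (0, K n^{3/5}]`. -/
theorem statement18 (V f : ℝ → ℝ) (l : ℝ) (hV : PerturbedQuartic V f l)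
    (v₁ : ℝ) (hv₁ : 0 < v₁) (x : ℝ → ℝ → ℝ) (hx : SolutionFamily V x v₁) :
    ∃ K > (0 : ℝ), ∃ C > (0 : ℝ), ∃ N : ℕ, 1 ≤ N ∧
      ∀ n : ℕ, N ≤ n → ∀ v ∈ Set.Icc (-1 : ℝ) 1,
        ∀ t ∈ Set.Ioc (0 : ℝ) (K * (n : ℝ) ^ ((3 : ℝ) / 5)),
          -- `x(Γ_{n,t}v; ·)` is defined (the initial velocity is admissible):
          |Real.sqrt (8 * t / (3 * Real.pi * (n : ℝ))) * v| ≤ v₁ ∧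
          |x (Real.sqrt (8 * t / (3 * Real.pi * (n : ℝ))) * v) t -
              Real.sqrt (8 * t / (3 * Real.pi * (n : ℝ))) * v * Real.sin t|
            ≤ C * Real.sqrt (8 * t / (3 * Real.pi * (n : ℝ))) ^ 3 * t := by
  obtain ⟨K, hK, C, hC, h⟩ := statement18_general hV.differentiable hV.isBigO_deriv_sub_id hv₁ hx
  refine ⟨K, hK, C, hC, 1, le_rfl, fun n hn v hv t ht => h n v hv t ⟨ht.1, ht.2.trans ?_⟩⟩
  gcongr
  exact rpow_le_self_of_one_le (by exact_mod_cast hn) (by norm_num)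
end
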